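/- arXiv:1107.3318 — 2 statements merged into one kernel-verified Lean document; each statement's English description precedes it below -/
import Mathlib

section
/- Let $n$ be a squarefree positive integer, $q$ an integer coprime to $n$ that is not a perfect $p$-th power for any prime $p \mid n$, and $d \mid n$. Then the polynomial $x^d - q$ is irreducible over the cyclotomic field $\mathbb{Q}(\zeta_n)$. -/
open Polynomial in
lemma aux_comb {K : Type*} [Field K] (a : K) (d : ℕ) (hsq : Squarefree d)
    (h : ∀ p : ℕ, p.Prime → p ∣ d → ∀ b : K, b ^ p ≠ a) :
    Irreducible (X ^ d - C a) := by
  have hd0 : 0 < d := Nat.pos_of_ne_zero hsq.ne_zero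
  have hdeg : (X ^ d - C a : K[X]).natDegree = d := natDegree_X_pow_sub_C
  have hmon : (X ^ d - C a : K[X]).Monic := monic_X_pow_sub_C a hd0.ne'
  have hnu : ¬ IsUnit (X ^ d - C a : K[X]) := by
    intro hu
    have := natDegree_eq_zero_of_isUnit hu
    omega
  obtain ⟨g, hg, hgd⟩ := WfDvdMonoid.exists_irreducible_factor hnu hmon.ne_zero
  have : Fact (Irreducible g) := ⟨hg⟩
  have hfin : Module.finrank K (AdjoinRoot g) = g.natDegree := by
    rw [(AdjoinRoot.powerBasis hg.ne_zero).finrank, AdjoinRoot.powerBasis_dim]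
  have : FiniteDimensional K (AdjoinRoot g) := (AdjoinRoot.powerBasis hg.ne_zero).finite
  have hroot : (AdjoinRoot.root g) ^ d = algebraMap K (AdjoinRoot g) a := by
    obtain ⟨k, hk⟩ := hgd
    have : aeval (AdjoinRoot.root g) (X ^ d - C a) = 0 := by
      rw [hk, map_mul, AdjoinRoot.aeval_eq, AdjoinRoot.mk_self, zero_mul]
    simpa [sub_eq_zero] using this
  have hp : ∀ p : ℕ, p.Prime → p ∣ d → p ∣ g.natDegree := by
    intro p hp hpd
    obtain ⟨e, he⟩ := hpd
    have hirr := X_pow_sub_C_irreducible_of_prime hp (h p hp ⟨e, he⟩)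
    have hm : minpoly K ((AdjoinRoot.root g) ^ e) = X ^ p - C a := by
      symm
      apply minpoly.eq_of_irreducible_of_monic hirr _ (monic_X_pow_sub_C a hp.ne_zero)
      simp [← pow_mul, mul_comm e p, ← he, hroot]
    have := minpoly.degree_dvd (K := K) (x := (AdjoinRoot.root g) ^ e) (Algebra.IsIntegral.isIntegral _)
    rwa [hm, natDegree_X_pow_sub_C, hfin] at this
  have hdd : d ∣ g.natDegree := by
    rw [← Nat.prod_primeFactors_of_squarefree hsq]
    apply Finset.prod_primes_dvd
    · intro p hp; exact (Nat.prime_of_mem_primeFactors hp).prime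
    · intro p hpd; exact hp p (Nat.prime_of_mem_primeFactors hpd) (Nat.dvd_of_mem_primeFactors hpd)
  have hle : d ≤ g.natDegree := Nat.le_of_dvd hg.natDegree_pos hdd
  have : Associated g (X ^ d - C a) :=
    associated_of_dvd_of_natDegree_le hgd hmon.ne_zero (by omega)
  exact this.irreducible hg

open Polynomial IntermediateField in
lemma aux_gen {F K : Type*} [Field F] [Field K] [Algebra F K] [IsAbelianGalois F K]
    [FiniteDimensional F K] {p : ℕ} (hp : p.Prime) (h2 : p ≠ 2) (a : F)
    (hirr : Irreducible (X ^ p - C a)) (ω : K) (hω : ω ^ p = 1)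
    (hdeg : (minpoly F ω).natDegree = p - 1) (b : K) (hb0 : b ≠ 0) :
    b ^ p ≠ algebraMap F K a := by
  intro hb
  have hm : minpoly F b = X ^ p - C a := by
    symm
    apply minpoly.eq_of_irreducible_of_monic hirr _ (monic_X_pow_sub_C _ hp.ne_zero)
    simp [hb]
  have hbi : IsIntegral F b := Algebra.IsIntegral.isIntegral b
  obtain ⟨σ, hσ⟩ := minpoly.exists_algEquiv_of_root' (K := F) (L := K) (x := ω * b) (y := b)
    hbi.isAlgebraic (by rw [hm]; simp [mul_pow, hω, hb])
  have hN : Normal F F⟮b⟯ := inferInstance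
  have hmem : ω * b ∈ F⟮b⟯ := by
    rw [← hσ]
    have := (IntermediateField.normal_iff_forall_map_le'.mp hN) σ
    exact this ⟨b, mem_adjoin_simple_self F b, rfl⟩
  have hωm : ω ∈ F⟮b⟯ := by
    have := div_mem hmem (mem_adjoin_simple_self F b)
    rwa [mul_div_cancel_right₀ _ hb0] at this
  have hdv := minpoly.degree_dvd (K := F) (x := (⟨ω, hωm⟩ : F⟮b⟯)) (Algebra.IsIntegral.isIntegral _)
  rw [IntermediateField.minpoly_eq, adjoin.finrank hbi, hm, natDegree_X_pow_sub_C] at hdv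
  simp only at hdv
  rw [hdeg] at hdv
  rcases (Nat.dvd_prime hp).mp hdv with h | h
  · have := hp.two_le; omega
  · have := hp.two_le; omega

open Polynomial in
lemma aux_odd {K : Type*} [Field K] [CharZero K] {n : ℕ} [NeZero n]
    [IsCyclotomicExtension {n} ℚ K] {p : ℕ} (hp : p.Prime) (h2 : p ≠ 2) (hpn : p ∣ n)
    (q : ℤ) (hq : ¬∃ x : ℤ, x ^ p = q) (b : K) : b ^ p ≠ (q : K) := by
  intro hb
  have hirr : Irreducible (X ^ p - C (q : ℚ)) := by
    apply X_pow_sub_C_irreducible_of_prime hp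
    intro c hc
    have hci : IsIntegral ℤ c := by
      refine IsIntegral.of_pow hp.pos ?_
      rw [hc]
      exact isIntegral_algebraMap (R := ℤ) (x := q)
    obtain ⟨z, hz⟩ := IsIntegrallyClosed.isIntegral_iff.mp hci
    apply hq
    refine ⟨z, ?_⟩
    have : ((z : ℚ)) = c := by simpa using hz
    rw [← this] at hc
    exact_mod_cast hc
  have hq0 : q ≠ 0 := by
    rintro rfl
    exact hq ⟨0, by simp [hp.ne_zero]⟩
  have hb0 : b ≠ 0 := by
    rintro rfl
    rw [zero_pow hp.ne_zero] at hb
    exact hq0 (by exact_mod_cast hb.symm)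
  have : IsAbelianGalois ℚ K := IsCyclotomicExtension.isAbelianGalois {n} ℚ K
  have : FiniteDimensional ℚ K := IsCyclotomicExtension.finiteDimensional {n} ℚ K
  obtain ⟨e, he⟩ := hpn
  have hω : IsPrimitiveRoot ((IsCyclotomicExtension.zeta n ℚ K) ^ e) p :=
    (IsCyclotomicExtension.zeta_spec n ℚ K).pow (NeZero.pos n) (by rw [he, mul_comm])
  set ω := (IsCyclotomicExtension.zeta n ℚ K) ^ e
  refine aux_gen (F := ℚ) hp h2 (q : ℚ) hirr ω hω.pow_eq_one ?_ b hb0 (by simpa using hb)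
  rw [← cyclotomic_eq_minpoly_rat hω hp.pos, natDegree_cyclotomic, Nat.totient_prime hp]

open Polynomial in
lemma aux_unram {K : Type*} [Field K] [CharZero K] {n : ℕ} [NeZero n]
    [IsCyclotomicExtension {n} ℚ K] {r : ℕ} (hr : r.Prime) (hrn : ¬ r ∣ n) (u : ℤ)
    (hu : ¬ (r : ℤ) ∣ u) (x : K) : x ^ 2 ≠ (r : K) * (u : K) := by
  intro hx
  have : NumberField K := IsCyclotomicExtension.numberField {n} ℚ K
  have : IsGalois ℚ K := IsCyclotomicExtension.isGalois {n} ℚ K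
  have : Fact r.Prime := ⟨hr⟩
  have hr0 : (r : K) ≠ 0 := by exact_mod_cast hr.ne_zero
  have hζ := IsCyclotomicExtension.zeta_spec n ℚ K
  set ζ := IsCyclotomicExtension.zeta n ℚ K
  have hζi : IsIntegral ℤ ζ := hζ.isIntegral (NeZero.pos n)
  have hxi : IsIntegral ℤ x := by
    refine IsIntegral.of_pow (n := 2) (by norm_num) ?_
    rw [hx]
    have := isIntegral_algebraMap (R := ℤ) (A := K) (x := (r : ℤ) * u)
    simpa using this
  have := IsCyclotomicExtension.Rat.isIntegralClosure_adjoin_singleton (K := K) hζ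
  obtain ⟨y, hy⟩ := (IsIntegralClosure.isIntegral_iff (A := Algebra.adjoin ℤ ({ζ} : Set K))).mp hxi
  have hxa : x ∈ Algebra.adjoin ℤ ({ζ} : Set K) := by rw [← hy]; exact y.2
  rw [Algebra.adjoin_singleton_eq_range_aeval] at hxa
  obtain ⟨P, hP⟩ := hxa
  replace hP : aeval ζ P = x := hP
  -- Frobenius
  have hdvd : C (r : ℤ) ∣ expand ℤ r P - P ^ r := by
    have h0 : (expand ℤ r P - P ^ r).map (Int.castRingHom (ZMod r)) = 0 := by
      rw [Polynomial.map_sub, Polynomial.map_pow, Polynomial.map_expand, ZMod.expand_card, sub_self]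
    rw [C_dvd_iff_dvd_coeff]
    intro i
    have := congrArg (fun f => coeff f i) h0
    simp only [coeff_map, coeff_zero] at this
    exact (ZMod.intCast_zmod_eq_zero_iff_dvd _ r).mp (by simpa using this)
  obtain ⟨Q, hQ⟩ := hdvd
  have hQ' := congrArg (aeval ζ) hQ
  simp only [map_sub, map_mul, map_pow, expand_aeval, hP] at hQ'
  have hcop : Nat.Coprime r n := (Nat.Prime.coprime_iff_not_dvd hr).mpr hrn
  have hζr : IsPrimitiveRoot (ζ ^ r) n := hζ.pow_of_coprime r hcop
  obtain ⟨σ, hσ⟩ : ∃ σ : Gal(K/ℚ), σ ζ = ζ ^ r :=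
    ⟨_, IsCyclotomicExtension.fromZetaAut_spec hζr (cyclotomic.irreducible_rat (NeZero.pos n))⟩
  have hσx : σ x = aeval (ζ ^ r) P := by
    rw [← hP, ← hσ]
    exact (aeval_algHom_apply ((σ : K →ₐ[ℚ] K).restrictScalars ℤ) ζ P).symm
  obtain ⟨m, hm⟩ : ∃ m, r = m + 2 := ⟨r - 2, by have := hr.two_le; omega⟩
  have hQi : IsIntegral ℤ (aeval ζ Q) := by
    rw [aeval_eq_sum_range]
    exact IsIntegral.sum _ fun i _ => (hζi.pow i).smul _
  set z := aeval ζ Q + u * x ^ m with hz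
  have hzi : IsIntegral ℤ z :=
    hQi.add (IsIntegral.mul (isIntegral_algebraMap (R := ℤ) (A := K) (x := u)) (hxi.pow m))
  have hxr : x ^ r = r * u * x ^ m := by
    rw [← hx]
    conv_lhs => rw [hm]
    ring
  have hσz : σ x = r * z := by
    rw [hσx]
    have e1 : aeval (ζ ^ r) P = (r : K) * aeval ζ Q + x ^ r := by
      rw [← sub_eq_iff_eq_add, hQ']; simp
    rw [e1, hxr, hz]; ring
  have h1 : (r : K) * z ^ 2 = u := by
    have h2 : (σ x) ^ 2 = r * u := by rw [← map_pow, hx]; simp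
    rw [hσz] at h2
    apply mul_left_cancel₀ hr0
    rw [← h2]; ring
  have hzq : IsIntegral ℤ ((u : ℚ) / r) := by
    have h3 : algebraMap ℚ K ((u : ℚ) / r) = z ^ 2 := by
      simp only [map_div₀, map_intCast, map_natCast]
      rw [← h1]; field_simp
    have h4 : IsIntegral ℤ (algebraMap ℚ K ((u : ℚ) / r)) := by rw [h3]; exact hzi.pow 2
    exact (isIntegral_algebraMap_iff (algebraMap ℚ K).injective).mp h4
  obtain ⟨w, hw⟩ := IsIntegrallyClosed.isIntegral_iff.mp hzq
  apply hu
  refine ⟨w, ?_⟩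
  have hr0' : (r : ℚ) ≠ 0 := by exact_mod_cast hr.ne_zero
  have hw' : (w : ℚ) = u / r := by simpa using hw
  rw [eq_div_iff hr0'] at hw'
  have : w * r = u := by exact_mod_cast hw'
  rw [← this]; ring

open Polynomial in
lemma aux_i {K : Type*} [Field K] [CharZero K] {n : ℕ} [NeZero n]
    [IsCyclotomicExtension {n} ℚ K] (hsq : Squarefree n) (x : K) : x ^ 2 ≠ -1 := by
  intro hx
  have : FiniteDimensional ℚ K := IsCyclotomicExtension.finiteDimensional {n} ℚ K
  have hζ := IsCyclotomicExtension.zeta_spec n ℚ K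
  have hx4 : IsPrimitiveRoot x 4 := by
    have : IsPrimitiveRoot x (2 ^ (1 + 1)) := by
      rw [IsPrimitiveRoot.iff_orderOf]
      apply orderOf_eq_prime_pow
      · rw [pow_one, hx]; norm_num
      · norm_num
        rw [show x ^ 4 = (x ^ 2) ^ 2 by ring, hx]; norm_num
    exact this
  have hn := NeZero.pos n
  have key := hx4.lcm_totient_le_finrank hζ (cyclotomic.irreducible_rat (Nat.lcm_pos (by norm_num) hn))
  rw [IsCyclotomicExtension.Rat.finrank n K] at key
  have h4 : ¬ 4 ∣ n := by
    rintro ⟨k, hk⟩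
    have := hsq 2 ⟨k, by omega⟩
    simp at this
  have hpos := Nat.totient_pos.mpr hn
  rcases Nat.even_or_odd n with he | ho
  · obtain ⟨m, hm⟩ := he.two_dvd
    have hmo : Odd m := by
      rw [← Nat.not_even_iff_odd]
      intro hme
      obtain ⟨k, hk⟩ := hme.two_dvd
      exact h4 ⟨k, by omega⟩
    have hc2 : Nat.Coprime 2 m := Nat.coprime_two_left.mpr hmo
    have hc4 : Nat.Coprime 4 m := Nat.Coprime.pow_left 2 hc2
    have hl : Nat.lcm 4 n = 4 * m := by
      apply Nat.dvd_antisymm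
      · exact Nat.lcm_dvd ⟨m, rfl⟩ ⟨2, by omega⟩
      · exact hc4.mul_dvd_of_dvd_of_dvd (Nat.dvd_lcm_left 4 n)
          (Dvd.dvd.trans ⟨2, by omega⟩ (Nat.dvd_lcm_right 4 n))
    rw [hl, hm, Nat.totient_mul hc4, Nat.totient_mul hc2] at key
    have t4 : Nat.totient 4 = 2 := by decide
    rw [hm, Nat.totient_mul hc2] at hpos
    rw [t4, Nat.totient_two] at key
    rw [Nat.totient_two] at hpos
    omega
  · have hc2 : Nat.Coprime 2 n := Nat.coprime_two_left.mpr ho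
    have hc4 : Nat.Coprime 4 n := Nat.Coprime.pow_left 2 hc2
    rw [hc4.lcm_eq_mul, Nat.totient_mul hc4] at key
    have t4 : Nat.totient 4 = 2 := by decide
    rw [t4] at key
    omega

lemma aux_two {K : Type*} [Field K] [CharZero K] {n : ℕ} [NeZero n]
    [IsCyclotomicExtension {n} ℚ K] (hsq : Squarefree n) (q : ℤ) (hco : IsCoprime q (n : ℤ))
    (hq : ¬∃ x : ℤ, x ^ 2 = q) (b : K) : b ^ 2 ≠ (q : K) := by
  intro hb
  have hq0 : q ≠ 0 := by
    rintro rfl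
    exact hq ⟨0, by simp⟩
  obtain ⟨a, c, hac, ha⟩ := Nat.sq_mul_squarefree q.natAbs
  obtain ⟨s, hs, hsc⟩ : ∃ s : ℤ, (s = 1 ∨ s = -1) ∧ q = s * (c ^ 2 * a) := by
    have hac' : ((c : ℤ) ^ 2 * a) = (q.natAbs : ℤ) := by exact_mod_cast hac
    rcases Int.natAbs_eq q with h | h
    · exact ⟨1, Or.inl rfl, by rw [hac']; omega⟩
    · exact ⟨-1, Or.inr rfl, by rw [hac']; omega⟩
  have hc0 : (c : K) ≠ 0 := by
    intro h
    have : c = 0 := by exact_mod_cast h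
    subst this
    exact hq0 (by simp [hsc])
  have hbc : (b / c) ^ 2 = (s : K) * a := by
    rw [div_pow, hb, hsc]; push_cast; field_simp
  by_cases ha1 : a = 1
  · subst ha1
    rcases hs with rfl | rfl
    · exact hq ⟨c, by rw [hsc]; simp⟩
    · exact aux_i (n := n) hsq (b / c) (by simpa using hbc)
  · obtain ⟨r, hr, u, hu⟩ := Nat.exists_prime_and_dvd ha1
    have hru : ¬ r ∣ u := by
      rintro ⟨k, hk⟩
      have := ha r ⟨k, by rw [hu, hk]; ring⟩
      exact hr.one_lt.ne' (Nat.isUnit_iff.mp this)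
    have hrn : ¬ r ∣ n := by
      intro h
      have h1 : (r : ℤ) ∣ q := by
        rw [hsc, hu]; push_cast
        exact ⟨s * c ^ 2 * u, by ring⟩
      have h2 : (r : ℤ) ∣ n := by exact_mod_cast h
      have := hco.isUnit_of_dvd' h1 h2
      have := Int.isUnit_iff_natAbs_eq.mp this
      simp at this
      exact hr.one_lt.ne' this
    refine aux_unram (n := n) hr hrn (s * u) ?_ (b / c) ?_
    · intro h
      apply hru
      rcases hs with rfl | rfl
      · have : (r : ℤ) ∣ u := by simpa using h
        exact_mod_cast this
      · have : (r : ℤ) ∣ u := by simpa using h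
        exact_mod_cast this
    · rw [hbc, hu]; push_cast; ring

open Polynomial in
theorem stmt_9 (n : ℕ+) (hsq : Squarefree (n : ℕ)) (q : ℤ)
    (hco : IsCoprime q (n : ℤ))
    (hpow : ∀ p : ℕ, p.Prime → p ∣ (n : ℕ) → ¬∃ x : ℤ, x ^ p = q)
    (d : ℕ) (hd : d ∣ (n : ℕ)) :
    Irreducible (X ^ d - C (q : CyclotomicField n ℚ)) := by
  have hcyc : @IsCyclotomicExtension {(n : ℕ)} ℚ (CyclotomicField n ℚ) _ _
      DivisionRing.toRatAlgebra := by
    have h := CyclotomicField.isCyclotomicExtension (n : ℕ) ℚ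
    have e : (DivisionRing.toRatAlgebra : Algebra ℚ (CyclotomicField n ℚ)) =
        CyclotomicField.algebra (n : ℕ) ℚ := Subsingleton.elim _ _
    rw [e]
    exact h
  apply aux_comb _ d (hsq.squarefree_of_dvd hd)
  intro p hp hpd b
  have hpn := hpd.trans hd
  by_cases h2 : p = 2
  · subst h2
    exact aux_two (n := n) hsq q hco (hpow 2 hp hpn) b
  · exact aux_odd (n := n) hp h2 hpn q (hpow p hp hpn) b
end

section
/- Let $n$ be a squarefree positive integer, $q$ an integer coprime to $n$ not a perfect $p$-th power for any prime $p \mid n$, and $d \mid n$. Then $L = \mathbb{Q}(q^{1/d}, \zeta_n)$ is a normal extension of $\mathbb{Q}$ of degree $[L : \mathbb{Q}] = d \cdot \varphi(n)$. -/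
open Polynomial

theorem aux_pow (a p : ℕ) (ha : a ≠ 0) (hp : p ≠ 0) (h : ∀ l, p ∣ a.factorization l) :
    ∃ y, a = y ^ p := by
  refine ⟨Nat.floorRoot p a, ?_⟩
  apply Nat.eq_of_factorization_eq ha (pow_ne_zero _ (Nat.floorRoot_ne_zero.2 ⟨hp, ha⟩))
  intro l
  simp only [Nat.factorization_pow, Nat.factorization_floorRoot]
  simp [Finsupp.floorDiv_apply, Nat.floorDiv_eq_div, Nat.mul_div_cancel' (h l)]

theorem aux_deg {K L : Type*} [Field K] [Field L] [Algebra K L] (d p : ℕ) (hp : p.Prime)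
   (hpd : p ∣ d)
    (q : K) (h : ∀ b : K, b ^ p ≠ q) (α : L) (hint : IsIntegral K α)
    (hα : α ^ d = algebraMap K L q) : p ∣ (minpoly K α).natDegree := by
  obtain ⟨e, rfl⟩ := hpd
  have hirr := X_pow_sub_C_irreducible_of_prime hp h
  have hb : minpoly K (α ^ e) = X ^ p - C q := by
    symm
    apply minpoly.eq_of_irreducible_of_monic hirr
    · simp [← pow_mul, mul_comm e, hα]
    · exact monic_X_pow_sub_C q hp.ne_zero
  have h1 : (minpoly K (α ^ e)).natDegree = p := by rw [hb]; simp
  have : FiniteDimensional K (IntermediateField.adjoin K {α}) :=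
    IntermediateField.adjoin.finiteDimensional hint
  have h2 := minpoly.degree_dvd (K := K) (L := IntermediateField.adjoin K {α})
    (x := ⟨α ^ e, pow_mem (IntermediateField.mem_adjoin_simple_self K α) e⟩)
    (IsIntegral.of_finite _ _)
  rw [IntermediateField.adjoin.finrank hint, IntermediateField.minpoly_eq] at h2
  simpa [h1] using h2

theorem aux_irred {K L : Type*} [Field K] [Field L] [Algebra K L] (d : ℕ) (hd : Squarefree d)
    (q : K) (h : ∀ p : ℕ, p.Prime → p ∣ d → ∀ b : K, b ^ p ≠ q) (α : L)
    (hα : α ^ d = algebraMap K L q) : Irreducible (X ^ d - C q) := by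
  have hd0 : d ≠ 0 := hd.ne_zero
  have hmon : (X ^ d - C q : K[X]).Monic := monic_X_pow_sub_C q hd0
  have hroot : aeval α (X ^ d - C q : K[X]) = 0 := by simp [hα]
  have hint : IsIntegral K α := ⟨_, hmon, by simpa [aeval_def] using hroot⟩
  have hdvd : d ∣ (minpoly K α).natDegree := by
    rw [← Nat.prod_primeFactors_of_squarefree hd]
    refine Finset.prod_primes_dvd _ (fun p hp => (Nat.prime_of_mem_primeFactors hp).prime) ?_
    intro p hp
    have hp' := Nat.prime_of_mem_primeFactors hp
    have hpd := Nat.dvd_of_mem_primeFactors hp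
    exact aux_deg d p hp' hpd q (h p hp' hpd) α hint hα
  have hle : d ≤ (minpoly K α).natDegree := Nat.le_of_dvd (minpoly.natDegree_pos hint) hdvd
  have : X ^ d - C q = minpoly K α := by
    apply eq_of_monic_of_dvd_of_natDegree_le (minpoly.monic hint) hmon (minpoly.dvd _ _ hroot)
    simpa using hle
  rw [this]
  exact minpoly.irreducible hint

open NumberField in
theorem aux_cyc (n : ℕ) [NeZero n] (K : Type*) [Field K] [NumberField K]
    [IsCyclotomicExtension {n} ℚ K] (q : ℤ) (hq : q ≠ 0) (hco : IsCoprime q (n : ℤ)) (p : ℕ)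
    (hp : p ≠ 0) (a : K) (ha : a ^ p = q) : ∃ y : ℕ, q.natAbs = y ^ p := by
  apply aux_pow _ _ (by simpa) hp
  intro l
  by_cases hl : l.Prime
  swap
  · simp [Nat.factorization_eq_zero_of_not_prime _ hl]
  by_cases hln : l ∣ n
  · rw [Nat.factorization_eq_zero_of_not_dvd]
    · simp
    · intro h
      have h1 : Nat.gcd q.natAbs n = 1 := by
        simpa [Int.gcd] using (Int.isCoprime_iff_gcd_eq_one.1 hco)
      exact hl.one_lt.ne' (Nat.dvd_one.1 (h1 ▸ Nat.dvd_gcd h hln))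
  have : Fact l.Prime := ⟨hl⟩
  have hli : Prime (l : ℤ) := Nat.prime_iff_prime_int.1 hl
  have : (Ideal.span {(l : ℤ)}).IsPrime := (Ideal.span_singleton_prime hli.ne_zero).2 hli
  obtain ⟨⟨P, hP1, hP2⟩⟩ := (Ideal.span {(l : ℤ)}).nonempty_primesOver (S := 𝓞 K)
  have hram := IsCyclotomicExtension.Rat.ramificationIdx_eq_of_not_dvd l K P hln
  have hmap : Ideal.map (algebraMap ℤ (𝓞 K)) (Ideal.span {(l : ℤ)}) = Ideal.span {(l : 𝓞 K)} := by
    simp [Ideal.map_span]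
  have hl0 : (l : 𝓞 K) ≠ 0 := by exact_mod_cast hl.ne_zero
  have hsp : Ideal.span {(l : 𝓞 K)} ≠ ⊥ := by simpa using hl.ne_zero
  rw [Ideal.IsDedekindDomain.ramificationIdx_eq_multiplicity (Ideal.span {(l : ℤ)}) P
    (hmap ▸ hsp), hmap] at hram
  have hPbot : P ≠ ⊥ := Ideal.ne_bot_of_liesOver_of_ne_bot (p := Ideal.span {(l : ℤ)}) (by simpa using hl.ne_zero) P
  have hPp : Prime P := Ideal.prime_of_isPrime hPbot hP1
  have hfin : FiniteMultiplicity P (Ideal.span {(l : 𝓞 K)}) := 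
    FiniteMultiplicity.of_prime_left hPp hsp
  have hem : emultiplicity P (Ideal.span {(l : 𝓞 K)}) = 1 := by
    rw [hfin.emultiplicity_eq_multiplicity, hram]; rfl
  have hint : IsIntegral ℤ a := by
    refine IsIntegral.of_pow (Nat.pos_of_ne_zero hp) ?_
    rw [ha]
    exact isIntegral_algebraMap (R := ℤ) (x := q)
  set b : 𝓞 K := ⟨a, hint⟩
  have hb : b ^ p = (q : 𝓞 K) := by
    apply RingOfIntegers.ext
    exact ha.trans (map_intCast (algebraMap (𝓞 K) K) q).symm
  obtain ⟨r, hr⟩ := Nat.ordProj_dvd q.natAbs l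
  set k := q.natAbs.factorization l
  have hlr : ¬ l ∣ r := by
    intro h
    have h1 : l ^ (k + 1) ∣ q.natAbs := by
      rw [hr, pow_succ]; exact mul_dvd_mul_left _ h
    exact Nat.pow_succ_factorization_not_dvd (by simpa) hl h1
  have hq1 : Ideal.span {(q : 𝓞 K)} = Ideal.span {(l : 𝓞 K)} ^ k * Ideal.span {(r : 𝓞 K)} := by
    rw [Ideal.span_singleton_pow, Ideal.span_singleton_mul_span_singleton]
    rw [Ideal.span_singleton_eq_span_singleton]
    have h2 : ((q.natAbs : ℤ) : 𝓞 K) = (l : 𝓞 K) ^ k * r := by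
      rw [hr]; push_cast; rfl
    rw [← h2]
    have := (Int.associated_natAbs q).map (Int.castRingHom (𝓞 K))
    simpa using this
  have hrP : emultiplicity P (Ideal.span {(r : 𝓞 K)}) = 0 := by
    rw [emultiplicity_eq_zero, Ideal.dvd_span_singleton]
    intro h
    have h3 : (r : ℤ) ∈ P.under ℤ := by simpa [Ideal.mem_comap] using h
    rw [← hP2.over, Ideal.mem_span_singleton] at h3
    exact hlr (by exact_mod_cast h3)
  have hE : emultiplicity P (Ideal.span {(q : 𝓞 K)}) = k := by
    rw [hq1, emultiplicity_mul hPp, emultiplicity_pow hPp, hem, hrP]; simp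
  rw [← hb, ← Ideal.span_singleton_pow, emultiplicity_pow hPp] at hE
  have hb0 : Ideal.span {b} ≠ ⊥ := by
    simp only [ne_eq, Ideal.span_singleton_eq_bot]
    rintro h
    rw [h, zero_pow hp] at hb
    exact hq (by exact_mod_cast hb.symm)
  rw [(FiniteMultiplicity.of_prime_left hPp hb0).emultiplicity_eq_multiplicity] at hE
  exact ⟨_, by exact_mod_cast hE.symm⟩

theorem aux_npow (n : ℕ) [NeZero n] (hsq : Squarefree n) (K : Type*) [Field K] [NumberField K]
    [IsCyclotomicExtension {n} ℚ K] (q : ℤ) (hco : IsCoprime q (n : ℤ)) (p : ℕ)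
    (hp : p.Prime) (hpn : p ∣ n) (hpow : ¬∃ x : ℤ, x ^ p = q) (a : K) : a ^ p ≠ q := by
  intro ha
  have hq : q ≠ 0 := by
    rintro rfl
    exact hpow ⟨0, zero_pow hp.ne_zero⟩
  obtain ⟨y, hy⟩ := aux_cyc n K q hq hco p hp.ne_zero a ha
  rcases Int.natAbs_eq q with h | h
  · exact hpow ⟨y, by rw [h, hy]; push_cast; rfl⟩
  rcases hp.eq_two_or_odd' with rfl | hodd
  swap
  · exact hpow ⟨-y, by rw [hodd.neg_pow, h, hy]; push_cast; rfl⟩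
  have hy0 : y ≠ 0 := by
    rintro rfl
    simp at hy; exact hq hy
  have hyK : (y : K) ≠ 0 := by exact_mod_cast hy0
  have hi : (a / y) ^ 2 = -1 := by
    rw [div_pow, ha, h, hy]
    push_cast
    field_simp
  have h4 : IsPrimitiveRoot (a / y) (2 ^ (1 + 1)) := by
    have h5 : orderOf (a / y) = 2 ^ (1 + 1) := by
      apply orderOf_eq_prime_pow
      · rw [pow_one, hi]; norm_num
      · rw [pow_add, pow_one, pow_mul, hi]; norm_num
    rw [← h5]; exact IsPrimitiveRoot.orderOf _
  obtain ⟨m, rfl⟩ := hpn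
  have hm : Odd m := by
    rw [← Nat.not_even_iff_odd]
    rintro hm
    obtain ⟨c, rfl⟩ := hm.two_dvd
    have := hsq 2 ⟨c, by ring⟩
    simp at this
  have hm0 : 0 < m := hm.pos
  have key := IsPrimitiveRoot.lcm_totient_le_finrank h4 (IsCyclotomicExtension.zeta_spec (2 * m) ℚ K)
    (cyclotomic.irreducible_rat (Nat.lcm_pos (by norm_num) (by positivity)))
  rw [IsCyclotomicExtension.Rat.finrank (2 * m) K] at key
  have hc2 : Nat.Coprime 2 m := (Nat.coprime_two_left).2 hm
  have hl : Nat.lcm (2 ^ (1 + 1)) (2 * m) = 4 * m := by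
    have : Nat.lcm (2 * 2) (2 * m) = 2 * Nat.lcm 2 m := Nat.lcm_mul_left _ _ _
    norm_num at this ⊢
    rw [this, hc2.lcm_eq_mul]; ring
  rw [hl, Nat.totient_mul hc2, Nat.totient_mul (Nat.Coprime.mul_left hc2 hc2 : Nat.Coprime 4 m)] at key
  have h7 : Nat.totient 4 = 2 := by decide
  have h8 : Nat.totient 2 = 1 := by decide
  have := Nat.totient_pos.2 hm0
  rw [h7, h8] at key
  omega

open Polynomial in
theorem stmt_10 (n : ℕ) (hn : 0 < n) (hsq : Squarefree n) (q : ℤ)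
    (hco : IsCoprime q (n : ℤ))
    (hpow : ∀ p : ℕ, p.Prime → p ∣ n → ¬∃ x : ℤ, x ^ p = q)
    (d : ℕ) (hd : d ∣ n) :
    Normal ℚ ((X ^ d - C (q : ℚ)) * (X ^ n - 1)).SplittingField ∧
      Module.finrank ℚ ((X ^ d - C (q : ℚ)) * (X ^ n - 1)).SplittingField
        = d * Nat.totient n := by
  refine ⟨by
    have h := @Normal.of_isSplittingField ℚ _ ((X ^ d - C (q : ℚ)) * (X ^ n - 1)).SplittingField _
      _ ((X ^ d - C (q : ℚ)) * (X ^ n - 1))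
      (IsSplittingField.splittingField _)
    convert! h, ?_⟩
  have hn0 : NeZero n := ⟨hn.ne'⟩
  have hd0 : d ≠ 0 := by rintro rfl; simp at hd; omega
  set f : ℚ[X] := (X ^ d - C (q : ℚ)) * (X ^ n - 1) with hf
  set L := f.SplittingField
  have hf1 : (X ^ d - C (q : ℚ) : ℚ[X]) ≠ 0 := (monic_X_pow_sub_C _ hd0).ne_zero
  have hf2 : (X ^ n - 1 : ℚ[X]) ≠ 0 := (monic_X_pow_sub_C (1:ℚ) hn.ne').ne_zero
  have hf0 : f ≠ 0 := mul_ne_zero hf1 hf2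
  have hs : (f.map (algebraMap ℚ L)).Splits := SplittingField.splits f
  have hfm0 : f.map (algebraMap ℚ L) ≠ 0 := (Polynomial.map_ne_zero hf0)
  have hs1 : ((X ^ d - C (q : ℚ)).map (algebraMap ℚ L)).Splits :=
    hs.of_dvd hfm0 (Polynomial.map_dvd _ (dvd_mul_right _ _))
  have hs2 : ((cyclotomic n ℚ).map (algebraMap ℚ L)).Splits :=
    hs.of_dvd hfm0 (Polynomial.map_dvd _ ((cyclotomic.dvd_X_pow_sub_one n ℚ).trans (dvd_mul_left _ _)))
  obtain ⟨ζ, hζ⟩ : ∃ ζ : L, IsPrimitiveRoot ζ n := by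
    rw [map_cyclotomic] at hs2
    obtain ⟨ζ, hζ⟩ := hs2.exists_eval_eq_zero (degree_cyclotomic_pos n L hn).ne'
    exact ⟨ζ, isRoot_cyclotomic_iff.1 hζ⟩
  have : NumberField L := {}
  let K := IntermediateField.adjoin ℚ {ζ}
  have hK : IsCyclotomicExtension {n} ℚ K := hζ.intermediateField_adjoin_isCyclotomicExtension (K := ℚ)
  have hirr : Irreducible (X ^ d - C (q : K)) := by
    obtain ⟨α, hα⟩ := hs1.exists_eval_eq_zero (by
      rw [degree_map, degree_X_pow_sub_C (Nat.pos_of_ne_zero hd0)]; exact_mod_cast hd0)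
    refine aux_irred (L := L) d (hsq.squarefree_of_dvd hd) _ ?_ α ?_
    · intro p hp hpd b
      exact aux_npow n hsq K q hco p hp (hpd.trans hd) (hpow p hp (hpd.trans hd)) b
    · simpa [sub_eq_zero] using hα
  have hζK : IsPrimitiveRoot (⟨ζ, IntermediateField.mem_adjoin_simple_self ℚ ζ⟩ : K) n :=
    IsPrimitiveRoot.coe_submonoidClass_iff.1 hζ
  have hprim : (primitiveRoots d K).Nonempty := by
    obtain ⟨e, he⟩ := hd
    exact ⟨_, (mem_primitiveRoots (Nat.pos_of_ne_zero hd0)).2 (hζK.pow hn (by rw [he, mul_comm]))⟩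
  have hspl : IsSplittingField K L (X ^ d - C (q : K)) := by
    refine ⟨?_, ?_⟩
    · simpa using hs1
    · rw [eq_top_iff]
      intro x _
      have hx : x ∈ Algebra.adjoin ℚ (f.rootSet L) := by
        have := SplittingField.adjoin_rootSet f
        exact this ▸ Algebra.mem_top
      have hle : Algebra.adjoin ℚ (f.rootSet L) ≤ 
        (Algebra.adjoin K ((X ^ d - C (q : K)).rootSet L)).restrictScalars ℚ := by
        rw [Algebra.adjoin_le_iff]
        intro y hy
        rw [mem_rootSet] at hy
        have hy2 := hy.2
        simp only [hf, map_mul, mul_eq_zero] at hy2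
        rw [SetLike.mem_coe, Subalgebra.mem_restrictScalars]
        rcases hy2 with h | h
        · apply Algebra.subset_adjoin
          rw [mem_rootSet]
          exact ⟨hirr.ne_zero, by simpa using h⟩
        · have h1 : y ^ n = 1 := by simpa [sub_eq_zero] using h
          obtain ⟨i, -, rfl⟩ := hζ.eq_pow_of_pow_eq_one h1
          exact pow_mem (Subalgebra.algebraMap_mem _ (⟨ζ, IntermediateField.mem_adjoin_simple_self ℚ ζ⟩ : K)) i
      exact hle hx
  have h1 : Module.finrank K L = d := finrank_of_isSplittingField_X_pow_sub_C hprim hirr L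
  have h2 : Module.finrank ℚ K = n.totient := IsCyclotomicExtension.Rat.finrank n K
  rw [← Module.finrank_mul_finrank ℚ K L, h1, h2, mul_comm]
end
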